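/- Under the one-dimensional resonator setting with uniform resonators and the resonance pattern below, for each pair p ≤ i, j ≤ q the following limits hold as ω → ω_0 with ω ≠ ω_0 (all entries being well defined for ω in a punctured neighborhood of ω_0): (a) lim (ω−ω_0)·𝒞^{ODE}_{ii}(ω) = δ v_b²·(1/(ℓ_i ℓ_{i−1,i}) + 1/(ℓ_i ℓ_{i,i+1})) for p < i < q; (b) lim (ω−ω_0)·𝒞^{ODE}_{pp}(ω) = δ v_b²/(ℓ_p ℓ_{p,p+1}) and lim (ω−ω_0)·𝒞^{ODE}_{qq}(ω) = δ v_b²/(ℓ_q ℓ_{q−1,q}); (c) lim (ω−ω_0)·𝒞^{ODE}_{i,i+1}(ω) = lim (ω−ω_0)·𝒞^{ODE}_{i+1,i}(ω) = −δ v_b²·(−1)^{n_i+m_i}/(ℓ_{i,i+1}·√(ℓ_i ℓ_{i+1})) for p ≤ i ≤ q−1; (d) lim (ω−ω_0)·𝒞^{ODE}_{ij}(ω) = 0 whenever |i−j| > 1. -/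

import Mathlib

/-!
Each entry `𝒞_{ij}` only involves the `i`-th coordinate pair of `𝒯_k g_j`, so pairing collapses the
sum to one index. On the diagonal this leaves two coefficients, one per neighbouring gap
(`dtnLeft`, `dtnRight`); for `|i - j| = 1` it leaves a single `k csc(k ℓ)`, and otherwise nothing.

At a resonant gap `k₀ L = m π`, `sin (ω L / v)` has a simple zero at `ω₀` with derivative
`cos (m π) L / v`, so `(ω - ω₀) k csc (k L) → (-1)^m ω₀ / L` and `(ω - ω₀) k cot (k L) → ω₀ / L`
(`tendsto_mul_rcsc`, `tendsto_mul_rcot`). A non-resonant gap, or an outer half-line, contributes a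
coefficient continuous at `ω₀`, which the factor `ω - ω₀` kills. Dividing by `2ω → 2ω₀` and
using `a_i a_j = 2 / √(ℓ_i ℓ_j)` gives the stated limits.
-/

open scoped Real

noncomputable section

/-- Real cotangent. -/
def rcot (x : ℝ) : ℝ := Real.cos x / Real.sin x

/-- Real cosecant. -/
def rcsc (x : ℝ) : ℝ := 1 / Real.sin x

/-- The bilinear pairing `⟨f,h⟩ = Σ_{i=1}^N (f_i^- h_i^- + f_i^+ h_i^+)` on the boundary
space `ℂ^{2N}`; the coordinate pair at index `i` is `(f_i^-, f_i^+)`. -/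
def pair1d (N : ℕ) (f h : ℕ → ℂ × ℂ) : ℂ :=
  ∑ i ∈ Finset.Icc 1 N, ((f i).1 * (h i).1 + (f i).2 * (h i).2)

/-- The exterior Dirichlet-to-Neumann matrix `𝒯_k` on `ℂ^{2N}`; `L t` denotes the
spacing `ℓ_{t,t+1}`. -/
def dtn1d (N : ℕ) (L : ℕ → ℝ) (k : ℝ) (f : ℕ → ℂ × ℂ) : ℕ → ℂ × ℂ := fun j =>
  (if j = 1 then Complex.I * (k : ℂ) * (f 1).1
   else ((k * rcsc (k * L (j - 1)) : ℝ) : ℂ) * (f (j - 1)).2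
        - ((k * rcot (k * L (j - 1)) : ℝ) : ℂ) * (f j).1,
   if j = N then Complex.I * (k : ℂ) * (f N).2
   else -((k * rcot (k * L j) : ℝ) : ℂ) * (f j).2
        + ((k * rcsc (k * L j) : ℝ) : ℂ) * (f (j + 1)).1)

/-- The boundary trace vector `g_j ∈ ℂ^{2N}`: `(g_j)_j^- = a_j`, `(g_j)_j^+ = s_j a_j`
with `a_j = √(2/ℓ_j)`, `s_j = (-1)^{n_j}`, all other coordinates zero. -/
def gvec1d (j : ℕ) (ℓj : ℝ) (nj : ℕ) : ℕ → ℂ × ℂ := fun i =>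
  if i = j then ((Real.sqrt (2 / ℓj) : ℂ), (-1 : ℂ) ^ nj * (Real.sqrt (2 / ℓj) : ℂ))
  else (0, 0)


open Filter Topology

lemma tendsto_mul_rcsc {v ω0 L : ℝ} (hv : 0 < v) (hL : 0 < L) {m : ℕ}
    (hm : ω0 / v * L = (m : ℝ) * π) :
    Tendsto (fun ω : ℝ => (ω - ω0) * (ω / v * rcsc (ω / v * L))) (𝓝[≠] ω0)
      (𝓝 ((-1) ^ m * (ω0 / L))) := by
  have hd : HasDerivAt (fun ω : ℝ => Real.sin (ω / v * L)) ((-1) ^ m * (1 / v * L)) ω0 := by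
    have h := (((hasDerivAt_id ω0).div_const v).mul_const L).sin
    simp only [id, hm, Real.cos_nat_mul_pi] at h
    exact h
  have hs := hasDerivAt_iff_tendsto_slope.mp hd
  have hne : ((-1 : ℝ) ^ m * (1 / v * L)) ≠ 0 := by positivity
  have hk : Tendsto (fun ω : ℝ => ω / v) (𝓝[≠] ω0) (𝓝 (ω0 / v)) :=
    ((continuous_id.div_const v).tendsto ω0).mono_left nhdsWithin_le_nhds
  have h := hk.mul (hs.inv₀ hne)
  have hval : ω0 / v * ((-1 : ℝ) ^ m * (1 / v * L))⁻¹ = (-1) ^ m * (ω0 / L) := by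
    rw [mul_inv, ← inv_pow]
    norm_num
    field_simp
  rw [hval] at h
  refine h.congr fun ω => ?_
  have h0 : Real.sin (ω0 / v * L) = 0 := by rw [hm, Real.sin_nat_mul_pi]
  simp only [slope_def_field, h0, rcsc, sub_zero, inv_div]
  ring

lemma tendsto_mul_rcot {v ω0 L : ℝ} (hv : 0 < v) (hL : 0 < L) {m : ℕ}
    (hm : ω0 / v * L = (m : ℝ) * π) :
    Tendsto (fun ω : ℝ => (ω - ω0) * (ω / v * rcot (ω / v * L))) (𝓝[≠] ω0) (𝓝 (ω0 / L)) := by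
  have hc : Tendsto (fun ω : ℝ => Real.cos (ω / v * L)) (𝓝[≠] ω0) (𝓝 ((-1) ^ m)) := by
    have : Continuous fun ω : ℝ => Real.cos (ω / v * L) := by fun_prop
    have h := this.tendsto ω0
    rw [hm, Real.cos_nat_mul_pi] at h
    exact h.mono_left nhdsWithin_le_nhds
  have h := hc.mul (tendsto_mul_rcsc hv hL hm)
  rw [← mul_assoc, ← mul_pow] at h
  norm_num at h
  refine h.congr fun ω => ?_
  simp only [rcot, rcsc]
  ring

/-- At a non-resonant gap the cotangent coefficient is continuous, so the factor `ω - ω₀` wins. -/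
lemma tendsto_mul_rcot_of_nonresonant {v ω0 L : ℝ}
    (h : ∀ t : ℤ, ω0 / v * L ≠ (t : ℝ) * π) :
    Tendsto (fun ω : ℝ => (ω - ω0) * (ω / v * rcot (ω / v * L))) (𝓝[≠] ω0) (𝓝 0) := by
  have hs : Real.sin (ω0 / v * L) ≠ 0 := by
    rw [Real.sin_ne_zero_iff]
    exact fun t => (h t).symm
  have hc : ContinuousAt (fun ω : ℝ => (ω - ω0) * (ω / v * rcot (ω / v * L))) ω0 := by
    unfold rcot
    fun_prop (disch := exact hs)
  have := hc.tendsto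
  simp only [sub_self, zero_mul] at this
  exact this.mono_left nhdsWithin_le_nhds

/-- The diagonal coefficient of `𝒯_k` at the left endpoint `x_j^-`. -/
def dtnLeft (L : ℕ → ℝ) (j : ℕ) (k : ℝ) : ℂ :=
  if j = 1 then Complex.I * (k : ℂ) else -((k * rcot (k * L (j - 1)) : ℝ) : ℂ)

/-- The diagonal coefficient of `𝒯_k` at the right endpoint `x_j^+`. -/
def dtnRight (N : ℕ) (L : ℕ → ℝ) (j : ℕ) (k : ℝ) : ℂ :=
  if j = N then Complex.I * (k : ℂ) else -((k * rcot (k * L j) : ℝ) : ℂ)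

lemma pair1d_gvec1d {N i : ℕ} (h1 : 1 ≤ i) (hN : i ≤ N) (F : ℕ → ℂ × ℂ) (l : ℝ) (n : ℕ) :
    pair1d N F (gvec1d i l n) =
      (F i).1 * (√(2 / l) : ℝ) + (F i).2 * ((-1) ^ n * (√(2 / l) : ℝ)) := by
  unfold pair1d
  rw [Finset.sum_eq_single i]
  · simp [gvec1d]
  · intro b _ hb
    simp [gvec1d, hb]
  · intro h
    exact absurd (Finset.mem_Icc.mpr ⟨h1, hN⟩) h

lemma pair_diag {N i : ℕ} (h1 : 1 ≤ i) (hN : i ≤ N) (L : ℕ → ℝ) (k : ℝ) {l : ℝ} (hl : 0 < l)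
    (n : ℕ) :
    pair1d N (dtn1d N L k (gvec1d i l n)) (gvec1d i l n) =
      (dtnLeft L i k + dtnRight N L i k) * ((2 / l : ℝ) : ℂ) := by
  have ha : ((2 / l : ℝ) : ℂ) = (√(2 / l) : ℝ) * (√(2 / l) : ℝ) := by
    rw [← Complex.ofReal_mul, Real.mul_self_sqrt (by positivity)]
  have hs : ((-1 : ℂ) ^ n) * (-1) ^ n = 1 := by rw [← mul_pow]; norm_num
  have hi : i - 1 ≠ i := by omega
  rw [pair1d_gvec1d h1 hN, ha]
  have e1 : (dtn1d N L k (gvec1d i l n) i).1 = dtnLeft L i k * (√(2 / l) : ℝ) := by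
    simp only [dtn1d, dtnLeft]
    split_ifs with h
    · subst h
      simp [gvec1d]
    · simp [gvec1d, hi]
  have e2 : (dtn1d N L k (gvec1d i l n) i).2 =
      dtnRight N L i k * ((-1) ^ n * (√(2 / l) : ℝ)) := by
    simp only [dtn1d, dtnRight]
    split_ifs with h
    · subst h
      simp [gvec1d]
    · simp [gvec1d]
  rw [e1, e2]
  linear_combination (dtnRight N L i k * (√(2 / l) : ℝ) * (√(2 / l) : ℝ)) * hs

lemma pair_upper {N i : ℕ} (h1 : 1 ≤ i) (hN : i < N) (L : ℕ → ℝ) (k l l' : ℝ) (n n' : ℕ) :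
    pair1d N (dtn1d N L k (gvec1d (i + 1) l' n')) (gvec1d i l n) =
      ((k * rcsc (k * L i) : ℝ) : ℂ) * ((-1) ^ n * ((√(2 / l) : ℝ) * (√(2 / l') : ℝ))) := by
  rw [pair1d_gvec1d h1 hN.le]
  have h2 : i - 1 ≠ i + 1 := by omega
  have h3 : (1 : ℕ) ≠ i + 1 := by omega
  simp only [dtn1d, gvec1d, hN.ne, h2, h3, if_false, if_true, Nat.ne_add_one]
  split_ifs <;> ring

lemma pair_lower {N i : ℕ} (h1 : 1 ≤ i) (hN : i < N) (L : ℕ → ℝ) (k l l' : ℝ) (n n' : ℕ) :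
    pair1d N (dtn1d N L k (gvec1d i l n)) (gvec1d (i + 1) l' n') =
      ((k * rcsc (k * L i) : ℝ) : ℂ) * ((-1) ^ n * ((√(2 / l) : ℝ) * (√(2 / l') : ℝ))) := by
  rw [pair1d_gvec1d (i := i + 1) (by omega) (by omega)]
  have h2 : i + 1 + 1 ≠ i := by omega
  have h3 : i + 1 ≠ 1 := by omega
  have h4 : i + 1 ≠ i := by omega
  have h5 : N ≠ i := by omega
  simp only [dtn1d, gvec1d, h2, h3, h4, h5, if_false, if_true, Nat.add_sub_cancel]
  split_ifs <;> ring

lemma pair_far {N i j : ℕ} (h1 : 1 ≤ i) (hN : i ≤ N) (hij : 1 < |(i : ℤ) - (j : ℤ)|)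
    (L : ℕ → ℝ) (k l l' : ℝ) (n n' : ℕ) :
    pair1d N (dtn1d N L k (gvec1d j l' n')) (gvec1d i l n) = 0 := by
  rw [pair1d_gvec1d h1 hN]
  rw [lt_abs] at hij
  have h2 : i ≠ j := by omega
  have h3 : i + 1 ≠ j := by omega
  have h4 : i - 1 ≠ j := by omega
  have e1 : i = 1 → 1 ≠ j := by omega
  have e2 : i = N → N ≠ j := by omega
  simp only [dtn1d, gvec1d, h2, h3, h4, if_false]
  split_ifs <;> simp_all

/-- The prefactor `-δ v_b² / (2ω)` is continuous at `ω₀ ≠ 0`, so only the limit of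
`(ω - ω₀) P(ω)` matters. -/
lemma tendsto_entry {ω0 : ℝ} (hω0 : ω0 ≠ 0) (A : ℂ) {P : ℝ → ℂ} {c : ℂ}
    (h : Tendsto (fun ω : ℝ => ((ω : ℂ) - (ω0 : ℂ)) * P ω) (𝓝[≠] ω0) (𝓝 c)) :
    Tendsto (fun ω : ℝ => ((ω : ℂ) - (ω0 : ℂ)) * (-A / (2 * (ω : ℂ)) * P ω)) (𝓝[≠] ω0)
      (𝓝 (-A / (2 * (ω0 : ℂ)) * c)) := by
  have hne : (2 * (ω0 : ℂ)) ≠ 0 := by simpa using hω0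
  have hc : ContinuousAt (fun ω : ℝ => -A / (2 * (ω : ℂ))) ω0 := by
    fun_prop (disch := exact hne)
  refine ((hc.tendsto.mono_left nhdsWithin_le_nhds).mul h).congr fun ω => ?_
  ring

/-- The radiating outer coefficient `i k` is regular at `ω₀`. -/
lemma tendsto_outer (v ω0 : ℝ) :
    Tendsto (fun ω : ℝ => ((ω : ℂ) - (ω0 : ℂ)) * (Complex.I * ((ω / v : ℝ) : ℂ))) (𝓝[≠] ω0)
      (𝓝 0) := by
  have hc : Continuous fun ω : ℝ =>
      ((ω : ℂ) - (ω0 : ℂ)) * (Complex.I * ((ω / v : ℝ) : ℂ)) := by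
    push_cast
    fun_prop
  have := hc.tendsto ω0
  simp only [sub_self, zero_mul] at this
  exact this.mono_left nhdsWithin_le_nhds

lemma tendsto_neg_ofReal {ω0 c : ℝ} {f : ℝ → ℝ}
    (h : Tendsto (fun ω : ℝ => (ω - ω0) * f ω) (𝓝[≠] ω0) (𝓝 c)) :
    Tendsto (fun ω : ℝ => ((ω : ℂ) - (ω0 : ℂ)) * -((f ω : ℝ) : ℂ)) (𝓝[≠] ω0)
      (𝓝 (-(c : ℂ))) := by
  refine ((Complex.continuous_ofReal.tendsto c).comp h).neg.congr fun ω => ?_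
  simp

lemma tendsto_diag {N i : ℕ} (h1 : 1 ≤ i) (hN : i ≤ N) (L : ℕ → ℝ) {v ω0 : ℝ} (hω0 : ω0 ≠ 0)
    {l : ℝ} (hl : 0 < l) (n : ℕ) (A : ℂ) {a b : ℝ}
    (hleft : Tendsto (fun ω : ℝ => ((ω : ℂ) - (ω0 : ℂ)) * dtnLeft L i (ω / v)) (𝓝[≠] ω0)
      (𝓝 (-((ω0 * a : ℝ) : ℂ))))
    (hright : Tendsto (fun ω : ℝ => ((ω : ℂ) - (ω0 : ℂ)) * dtnRight N L i (ω / v)) (𝓝[≠] ω0)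
      (𝓝 (-((ω0 * b : ℝ) : ℂ)))) :
    Tendsto (fun ω : ℝ => ((ω : ℂ) - (ω0 : ℂ)) * (-A / (2 * (ω : ℂ)) *
        pair1d N (dtn1d N L (ω / v) (gvec1d i l n)) (gvec1d i l n)))
      (𝓝[≠] ω0) (𝓝 (A * (((a + b) / l : ℝ) : ℂ))) := by
  have h : Tendsto (fun ω : ℝ => ((ω : ℂ) - (ω0 : ℂ)) *
      pair1d N (dtn1d N L (ω / v) (gvec1d i l n)) (gvec1d i l n)) (𝓝[≠] ω0)
      (𝓝 ((-((ω0 * a : ℝ) : ℂ) + -((ω0 * b : ℝ) : ℂ)) * ((2 / l : ℝ) : ℂ))) := by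
    refine ((hleft.add hright).mul_const _).congr fun ω => ?_
    rw [pair_diag h1 hN L _ hl]
    ring
  convert tendsto_entry hω0 A h using 2
  have hωc : (ω0 : ℂ) ≠ 0 := by exact_mod_cast hω0
  have hlc : (l : ℂ) ≠ 0 := by exact_mod_cast hl.ne'
  push_cast
  field_simp
  ring

lemma tendsto_offdiag {v ω0 L l l' : ℝ} (hv : 0 < v) (hω0 : ω0 ≠ 0) (hL : 0 < L) (hl : 0 < l)
    (hl' : 0 < l') {m : ℕ} (hm : ω0 / v * L = (m : ℝ) * π) (n : ℕ) (A : ℂ) :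
    Tendsto (fun ω : ℝ => ((ω : ℂ) - (ω0 : ℂ)) * (-A / (2 * (ω : ℂ)) *
        (((ω / v * rcsc (ω / v * L) : ℝ) : ℂ) *
          ((-1) ^ n * ((√(2 / l) : ℝ) * (√(2 / l') : ℝ))))))
      (𝓝[≠] ω0) (𝓝 (-(A * (((-1 : ℝ) ^ (n + m) / (L * √(l * l')) : ℝ) : ℂ)))) := by
  have h : Tendsto (fun ω : ℝ => ((ω : ℂ) - (ω0 : ℂ)) *
      (((ω / v * rcsc (ω / v * L) : ℝ) : ℂ) *
          ((-1) ^ n * ((√(2 / l) : ℝ) * (√(2 / l') : ℝ))))) (𝓝[≠] ω0)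
      (𝓝 ((((-1) ^ m * (ω0 / L) : ℝ) : ℂ) *
        ((-1) ^ n * ((√(2 / l) : ℝ) * (√(2 / l') : ℝ))))) := by
    refine (((Complex.continuous_ofReal.tendsto _).comp
      (tendsto_mul_rcsc hv hL hm)).mul_const _).congr fun ω => ?_
    simp only [Function.comp]
    push_cast
    ring
  convert tendsto_entry hω0 A h using 2
  have hωc : (ω0 : ℂ) ≠ 0 := by exact_mod_cast hω0
  have hLc : (L : ℂ) ≠ 0 := by exact_mod_cast hL.ne'
  have hsq : √(2 / l) * √(2 / l') = 2 / √(l * l') := by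
    rw [← Real.sqrt_mul (by positivity), div_mul_div_comm, Real.sqrt_div (by norm_num)]
    norm_num
  have hr : √(l * l') ≠ 0 := by positivity
  have hrc : ((√(l * l') : ℝ) : ℂ) ≠ 0 := by exact_mod_cast hr
  rw [← Complex.ofReal_mul, hsq]
  push_cast
  field_simp
  ring

/-- singular-case entrywise limits of `(ω−ω_0)·𝒞^{ODE}_{ij}(ω)` as
`ω → ω_0`, `ω ≠ ω_0`, under the resonance pattern `k_{b,0}ℓ_i = n_i π` (`p ≤ i ≤ q`),
`k_0 ℓ_{i,i+1} = m_i π` (`p ≤ i ≤ q−1`), with non-resonant outer spacings. -/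
theorem capacitance_singular_limits
    (N : ℕ) (hN : 2 ≤ N)
    (xm xp : ℕ → ℝ)
    (hord : ∀ i, 1 ≤ i → i ≤ N → xm i < xp i)
    (hsep : ∀ i, 1 ≤ i → i < N → xp i < xm (i + 1))
    (v vb ω0 : ℝ) (hv : 0 < v) (hvb : 0 < vb) (hω0 : ω0 ≠ 0)
    (δ : ℂ)
    (p q : ℕ) (hp : 1 ≤ p) (hpq : p < q) (hqN : q ≤ N)
    (n m : ℕ → ℕ)
    (hn : ∀ i, p ≤ i → i ≤ q → 0 < n i ∧ ω0 / vb * (xp i - xm i) = (n i : ℝ) * π)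
    (hm : ∀ i, p ≤ i → i < q → 0 < m i ∧ ω0 / v * (xm (i + 1) - xp i) = (m i : ℝ) * π)
    (houtl : 1 < p → ∀ t : ℤ, ω0 / v * (xm p - xp (p - 1)) ≠ (t : ℝ) * π)
    (houtr : q < N → ∀ t : ℤ, ω0 / v * (xm (q + 1) - xp q) ≠ (t : ℝ) * π) :
    -- (a) interior diagonal entries
    (∀ i, p < i → i < q →
      Tendsto (fun ω : ℝ => ((ω : ℂ) - (ω0 : ℂ)) *
          (-(δ * (vb : ℂ) ^ 2) / (2 * (ω : ℂ)) *
            pair1d N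
              (dtn1d N (fun t => xm (t + 1) - xp t) (ω / v)
                (gvec1d i (xp i - xm i) (n i)))
              (gvec1d i (xp i - xm i) (n i))))
        (𝓝[≠] ω0)
        (𝓝 (δ * (vb : ℂ) ^ 2 *
          ((1 / ((xp i - xm i) * (xm i - xp (i - 1))) +
            1 / ((xp i - xm i) * (xm (i + 1) - xp i)) : ℝ) : ℂ)))) ∧
    -- (b) endpoint diagonal entries
    (Tendsto (fun ω : ℝ => ((ω : ℂ) - (ω0 : ℂ)) *
        (-(δ * (vb : ℂ) ^ 2) / (2 * (ω : ℂ)) *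
          pair1d N
            (dtn1d N (fun t => xm (t + 1) - xp t) (ω / v)
              (gvec1d p (xp p - xm p) (n p)))
            (gvec1d p (xp p - xm p) (n p))))
      (𝓝[≠] ω0)
      (𝓝 (δ * (vb : ℂ) ^ 2 *
        ((1 / ((xp p - xm p) * (xm (p + 1) - xp p)) : ℝ) : ℂ))) ∧
     Tendsto (fun ω : ℝ => ((ω : ℂ) - (ω0 : ℂ)) *
        (-(δ * (vb : ℂ) ^ 2) / (2 * (ω : ℂ)) *
          pair1d N
            (dtn1d N (fun t => xm (t + 1) - xp t) (ω / v)
              (gvec1d q (xp q - xm q) (n q)))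
            (gvec1d q (xp q - xm q) (n q))))
      (𝓝[≠] ω0)
      (𝓝 (δ * (vb : ℂ) ^ 2 *
        ((1 / ((xp q - xm q) * (xm q - xp (q - 1))) : ℝ) : ℂ)))) ∧
    -- (c) off-diagonal entries
    (∀ i, p ≤ i → i < q →
      Tendsto (fun ω : ℝ => ((ω : ℂ) - (ω0 : ℂ)) *
          (-(δ * (vb : ℂ) ^ 2) / (2 * (ω : ℂ)) *
            pair1d N
              (dtn1d N (fun t => xm (t + 1) - xp t) (ω / v)
                (gvec1d (i + 1) (xp (i + 1) - xm (i + 1)) (n (i + 1))))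
              (gvec1d i (xp i - xm i) (n i))))
        (𝓝[≠] ω0)
        (𝓝 (-(δ * (vb : ℂ) ^ 2 *
          (((-1 : ℝ) ^ (n i + m i) /
            ((xm (i + 1) - xp i) *
              Real.sqrt ((xp i - xm i) * (xp (i + 1) - xm (i + 1)))) : ℝ) : ℂ)))) ∧
      Tendsto (fun ω : ℝ => ((ω : ℂ) - (ω0 : ℂ)) *
          (-(δ * (vb : ℂ) ^ 2) / (2 * (ω : ℂ)) *
            pair1d N
              (dtn1d N (fun t => xm (t + 1) - xp t) (ω / v)
                (gvec1d i (xp i - xm i) (n i)))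
              (gvec1d (i + 1) (xp (i + 1) - xm (i + 1)) (n (i + 1)))))
        (𝓝[≠] ω0)
        (𝓝 (-(δ * (vb : ℂ) ^ 2 *
          (((-1 : ℝ) ^ (n i + m i) /
            ((xm (i + 1) - xp i) *
              Real.sqrt ((xp i - xm i) * (xp (i + 1) - xm (i + 1)))) : ℝ) : ℂ))))) ∧
    -- (d) far off-diagonal entries
    (∀ i j, p ≤ i → i ≤ q → p ≤ j → j ≤ q → 1 < |(i : ℤ) - (j : ℤ)| →
      Tendsto (fun ω : ℝ => ((ω : ℂ) - (ω0 : ℂ)) *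
          (-(δ * (vb : ℂ) ^ 2) / (2 * (ω : ℂ)) *
            pair1d N
              (dtn1d N (fun t => xm (t + 1) - xp t) (ω / v)
                (gvec1d j (xp j - xm j) (n j)))
              (gvec1d i (xp i - xm i) (n i))))
        (𝓝[≠] ω0) (𝓝 0)) := by
  have hlen : ∀ i, p ≤ i → i ≤ q → 0 < xp i - xm i := fun i h1 h2 =>
    sub_pos.mpr (hord i (by omega) (by omega))
  have hgap : ∀ i, p ≤ i → i < q → 0 < xm (i + 1) - xp i := fun i h1 h2 =>
    sub_pos.mpr (hsep i (by omega) (by omega))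
  -- Resonant gaps on either side of a resonator, and the regular outer sides of `p` and `q`.
  have hR : ∀ i, p ≤ i → i < q →
      Tendsto (fun ω : ℝ => ((ω : ℂ) - (ω0 : ℂ)) *
          dtnRight N (fun t => xm (t + 1) - xp t) i (ω / v)) (𝓝[≠] ω0)
        (𝓝 (-((ω0 * (1 / (xm (i + 1) - xp i)) : ℝ) : ℂ))) := by
    intro i h1 h2
    have hne : i ≠ N := by omega
    simp only [dtnRight, hne, if_false, mul_one_div]
    exact tendsto_neg_ofReal (tendsto_mul_rcot hv (hgap i h1 h2) (hm i h1 h2).2)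
  have hL : ∀ i, p < i → i ≤ q →
      Tendsto (fun ω : ℝ => ((ω : ℂ) - (ω0 : ℂ)) *
          dtnLeft (fun t => xm (t + 1) - xp t) i (ω / v)) (𝓝[≠] ω0)
        (𝓝 (-((ω0 * (1 / (xm i - xp (i - 1))) : ℝ) : ℂ))) := by
    intro i h1 h2
    obtain ⟨j, rfl⟩ : ∃ j, i = j + 1 := ⟨i - 1, by omega⟩
    have hne : j + 1 ≠ 1 := by omega
    simp only [dtnLeft, hne, if_false, mul_one_div, Nat.add_sub_cancel]
    exact tendsto_neg_ofReal
      (tendsto_mul_rcot hv (hgap j (by omega) (by omega)) (hm j (by omega) (by omega)).2)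
  have hLp : Tendsto (fun ω : ℝ => ((ω : ℂ) - (ω0 : ℂ)) *
          dtnLeft (fun t => xm (t + 1) - xp t) p (ω / v)) (𝓝[≠] ω0)
        (𝓝 (-((ω0 * 0 : ℝ) : ℂ))) := by
    rw [mul_zero]
    by_cases h : p = 1
    · simp only [dtnLeft, h, if_true, Complex.ofReal_zero, neg_zero]
      exact tendsto_outer v ω0
    · simp only [dtnLeft, h, if_false]
      apply tendsto_neg_ofReal
      apply tendsto_mul_rcot_of_nonresonant
      rw [Nat.sub_add_cancel hp]
      exact houtl (by omega)
  have hRq : Tendsto (fun ω : ℝ => ((ω : ℂ) - (ω0 : ℂ)) *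
          dtnRight N (fun t => xm (t + 1) - xp t) q (ω / v)) (𝓝[≠] ω0)
        (𝓝 (-((ω0 * 0 : ℝ) : ℂ))) := by
    rw [mul_zero]
    by_cases h : q = N
    · simp only [dtnRight, h, if_true, Complex.ofReal_zero, neg_zero]
      exact tendsto_outer v ω0
    · simp only [dtnRight, h, if_false]
      apply tendsto_neg_ofReal
      apply tendsto_mul_rcot_of_nonresonant
      exact houtr (by omega)
  refine ⟨?_, ⟨?_, ?_⟩, ?_, ?_⟩
  · intro i h1 h2
    convert tendsto_diag (by omega) (by omega) _ hω0 (hlen i h1.le h2.le) (n i) (δ * (vb : ℂ) ^ 2)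
      (hL i h1 h2.le) (hR i h1.le h2) using 4
    rw [add_div, div_div, div_div, mul_comm (xm i - _), mul_comm (xm (i + 1) - _)]
  · convert tendsto_diag hp (by omega) _ hω0 (hlen p le_rfl hpq.le) (n p) (δ * (vb : ℂ) ^ 2)
      hLp (hR p le_rfl hpq) using 4
    rw [zero_add, div_div, mul_comm (xm (p + 1) - _)]
  · convert tendsto_diag (by omega) hqN _ hω0 (hlen q hpq.le le_rfl) (n q) (δ * (vb : ℂ) ^ 2)
      (hL q hpq le_rfl) hRq using 4
    rw [add_zero, div_div, mul_comm (xm q - _)]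
  · intro i h1 h2
    have h := tendsto_offdiag hv hω0 (hgap i h1 h2) (hlen i h1 h2.le)
      (hlen (i + 1) (by omega) h2) (hm i h1 h2).2 (n i) (δ * (vb : ℂ) ^ 2)
    refine ⟨h.congr fun ω => ?_, h.congr fun ω => ?_⟩
    · rw [pair_upper (by omega) (by omega)]
    · rw [pair_lower (by omega) (by omega)]
  · intro i j h1 h2 _ _ hij
    refine tendsto_const_nhds.congr fun ω => ?_
    rw [pair_far (by omega) (by omega) hij, mul_zero, mul_zero]

end
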